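/- Weak comparison principle for finite subsets: Let p ∈ (1,∞) and let K ⊆ K̃ ⊆ X with K and K̃ finite and λ₀(K̃) > 0. Let v ∈ F(K) satisfy Hv ≥ 0 on K and v ≥ 0 on ∂K ∪ (K̃∖K), and let u ∈ F(K) satisfy Hu ≤ Hv on K and u ≤ v on ∂K ∪ (K̃∖K). If either (a) v vanishes outside K̃, or (b) u vanishes outside K̃, Hu ≥ 0 on K, and u ≥ 0 on ∂K ∪ (K̃∖K), then u ≤ v on K. -/

import Mathlib

open scoped BigOperators

/-- `⟨a⟩_p := |a|^{p-1} · sgn(a)`. -/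
noncomputable def pPow (p a : ℝ) : ℝ := |a| ^ (p - 1) * Real.sign a

/-- `C(V)`: real-valued functions on `X` vanishing outside `V`. -/
def MemC {X : Type*} (V : Set X) (f : X → ℝ) : Prop := ∀ x ∉ V, f x = 0

/-- `C_c(V)`: finitely supported functions with support contained in `V`. -/
def MemCc {X : Type*} (V : Set X) (f : X → ℝ) : Prop :=
  (Function.support f).Finite ∧ ∀ x ∉ V, f x = 0

/-- The formal space `F(V)`. -/
def MemF {X : Type*} (b : X → X → ℝ) (p : ℝ) (V : Set X) (f : X → ℝ) : Prop :=
  ∀ x ∈ V, Summable fun y => b x y * |f y| ^ (p - 1)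

/-- The domain `D` of the energy functional. -/
def MemD {X : Type*} (b : X → X → ℝ) (c : X → ℝ) (p : ℝ) (f : X → ℝ) : Prop :=
  (Summable fun z : X × X => b z.1 z.2 * |f z.1 - f z.2| ^ p) ∧
  (Summable fun x => |c x| * |f x| ^ p)

/-- The `p`-energy functional `h`. -/
noncomputable def energy {X : Type*} (b : X → X → ℝ) (c : X → ℝ) (p : ℝ) (f : X → ℝ) : ℝ :=
  (1 / 2) * ∑' z : X × X, b z.1 z.2 * |f z.1 - f z.2| ^ p + ∑' x, c x * |f x| ^ p

/-- The `p`-Schrödinger operator `H`. -/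
noncomputable def HOp {X : Type*} (m : X → ℝ) (b : X → X → ℝ) (c : X → ℝ) (p : ℝ)
    (f : X → ℝ) (x : X) : ℝ :=
  (1 / m x) * ∑' y, b x y * pPow p (f x - f y) + (c x / m x) * pPow p (f x)

/-- The `p`-Laplacian `L` (i.e. `H` with potential `0`). -/
noncomputable def LOp {X : Type*} (m : X → ℝ) (b : X → X → ℝ) (p : ℝ)
    (f : X → ℝ) (x : X) : ℝ :=
  (1 / m x) * ∑' y, b x y * pPow p (f x - f y)

/-- `(X, m, b)` is a weighted graph. -/
def IsGraph {X : Type*} (m : X → ℝ) (b : X → X → ℝ) : Prop :=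
  (∀ x, 0 < m x) ∧ (∀ x y, 0 ≤ b x y) ∧ (∀ x y, b x y = b y x) ∧
  (∀ x, b x x = 0) ∧ (∀ x, Summable fun y => b x y)

/-- A set `V` is connected w.r.t. the graph: any two of its vertices are joined by a
path of neighbours inside `V`. -/
def ConnectedIn {X : Type*} (b : X → X → ℝ) (V : Set X) : Prop :=
  ∀ x ∈ V, ∀ y ∈ V, Relation.ReflTransGen (fun u v => u ∈ V ∧ v ∈ V ∧ 0 < b u v) x y

/-- The (outer) boundary `∂V`. -/
def bdry {X : Type*} (b : X → X → ℝ) (V : Set X) : Set X :=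
  {y | y ∉ V ∧ ∃ z ∈ V, 0 < b y z}

/-- `u` is harmonic on `V` (w.r.t. `H`). -/
def HarmonicOn {X : Type*} (m : X → ℝ) (b : X → X → ℝ) (c : X → ℝ) (p : ℝ)
    (V : Set X) (u : X → ℝ) : Prop := ∀ x ∈ V, HOp m b c p u x = 0

/-- `u` is superharmonic on `V` (w.r.t. `H`). -/
def SuperharmonicOn {X : Type*} (m : X → ℝ) (b : X → X → ℝ) (c : X → ℝ) (p : ℝ)
    (V : Set X) (u : X → ℝ) : Prop := ∀ x ∈ V, 0 ≤ HOp m b c p u x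

/-- `h` is non-negative on `C_c(V)`. -/
def EnergyNonneg {X : Type*} (b : X → X → ℝ) (c : X → ℝ) (p : ℝ) (V : Set X) : Prop :=
  ∀ φ : X → ℝ, MemCc V φ → 0 ≤ energy b c p φ

/-- `h` is subcritical in `V`: a Hardy inequality holds. -/
def Subcritical {X : Type*} (b : X → X → ℝ) (c : X → ℝ) (p : ℝ) (V : Set X) : Prop :=
  ∃ w : X → ℝ, (∀ x, 0 ≤ w x) ∧ w ≠ 0 ∧
    ∀ φ : X → ℝ, MemCc V φ → (∑' x, |φ x| ^ p * w x) ≤ energy b c p φ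

/-- `h` is critical in `V`. -/
def Critical {X : Type*} (b : X → X → ℝ) (c : X → ℝ) (p : ℝ) (V : Set X) : Prop :=
  EnergyNonneg b c p V ∧ ¬ Subcritical b c p V

/-- The bottom of the spectrum / variational constant `λ₀(V)`. -/
noncomputable def lam0 {X : Type*} (m : X → ℝ) (b : X → X → ℝ) (c : X → ℝ) (p : ℝ)
    (V : Set X) : ℝ :=
  sInf {r : ℝ | ∃ φ : X → ℝ, MemCc V φ ∧ φ ≠ 0 ∧
    r = energy b c p φ / ∑' x, |φ x| ^ p * m x}

/-- The variational `p`-capacity `cap_h(x, V)`. -/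
noncomputable def capH {X : Type*} (b : X → X → ℝ) (c : X → ℝ) (p : ℝ)
    (V : Set X) (x : X) : ℝ :=
  sInf {r : ℝ | ∃ φ : X → ℝ, MemCc V φ ∧ φ x = 1 ∧ r = energy b c p φ}

/-- The weighted bracket `⟨f, g⟩_V = Σ_{x ∈ V} f(x) g(x) m(x)`. -/
noncomputable def bracket {X : Type*} (m : X → ℝ) (V : Set X) (f g : X → ℝ) : ℝ :=
  ∑' x, Set.indicator V (fun x => f x * g x * m x) x

/-- `u ∈ M(V ∖ K)`: positive harmonic function of minimal growth in a neighbourhood of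
infinity in `V` (harmonic on `V∖K`, positive on `V ∪ ∂V`). -/
def MemM {X : Type*} (m : X → ℝ) (b : X → X → ℝ) (c : X → ℝ) (p : ℝ)
    (V K : Set X) (u : X → ℝ) : Prop :=
  HarmonicOn m b c p (V \ K) u ∧
  (∀ x ∈ V ∪ bdry b V, 0 ≤ u x) ∧ (∃ x ∈ V ∪ bdry b V, u x ≠ 0) ∧
  ∀ K' : Set X, K ⊆ K' → K' ⊆ V → K'.Finite → ConnectedIn b K' →
    ∀ v : X → ℝ, MemF b p (V \ K') v →
      (∀ x ∈ V \ K', 0 ≤ v x) → (∃ x ∈ V \ K', v x ≠ 0) →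
      SuperharmonicOn m b c p (V \ K') v →
      (∀ x ∈ K', u x ≤ v x) → ∀ x ∈ V \ K', u x ≤ v x

/-- `u` is a normalised Green's function in `V` at `o`. -/
def IsNormalisedGreen {X : Type*} (m : X → ℝ) (b : X → X → ℝ) (c : X → ℝ) (p : ℝ)
    (V : Set X) (o : X) (u : X → ℝ) : Prop :=
  MemM m b c p V {o} u ∧ MemF b p V u ∧ HOp m b c p u o ≠ 0 ∧
  ∀ x ∈ V, HOp m b c p u x = Set.indicator {o} (fun _ => (1:ℝ)) x


lemma pPow_nn {p a : ℝ} (hp : 1 < p) (ha : 0 ≤ a) : pPow p a = a ^ (p - 1) := by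
  unfold pPow
  rcases ha.eq_or_lt with h | h
  · rw [← h]; simp [Real.zero_rpow (by linarith : p - 1 ≠ 0)]
  · rw [Real.sign_of_pos h, abs_of_pos h, mul_one]

lemma pPow_neg' (p a : ℝ) : pPow p (-a) = - pPow p a := by
  unfold pPow
  rw [abs_neg, Real.sign_neg, mul_neg]

lemma pPow_strictMono {p : ℝ} (hp : 1 < p) : StrictMono (pPow p) := by
  have key : ∀ a b : ℝ, 0 ≤ a → a < b → pPow p a < pPow p b := by
    intro a b ha hab
    rw [pPow_nn hp ha, pPow_nn hp (ha.trans hab.le)]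
    exact Real.rpow_lt_rpow ha hab (by linarith)
  intro a b hab
  have h0 : pPow p 0 = 0 := by
    rw [pPow_nn hp le_rfl, Real.zero_rpow (by linarith)]
  rcases le_or_gt 0 a with ha | ha
  · exact key a b ha hab
  · rcases le_or_gt b 0 with hb | hb
    · have := key (-b) (-a) (by linarith) (by linarith)
      rw [pPow_neg', pPow_neg'] at this
      linarith
    · have h1 := key 0 (-a) le_rfl (by linarith)
      have h2 := key 0 b le_rfl hb
      rw [pPow_neg'] at h1
      linarith

lemma pPow_mul {p : ℝ} (t a : ℝ) (ht : 0 < t) :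
    pPow p (t * a) = t ^ (p - 1) * pPow p a := by
  unfold pPow
  rw [abs_mul, abs_of_pos ht, Real.mul_rpow ht.le (abs_nonneg a)]
  have : Real.sign (t * a) = Real.sign a := by
    rcases lt_trichotomy a 0 with h | h | h
    · rw [Real.sign_of_neg h, Real.sign_of_neg (mul_neg_of_pos_of_neg ht h)]
    · simp [h]
    · rw [Real.sign_of_pos h, Real.sign_of_pos (mul_pos ht h)]
  rw [this, mul_assoc]

lemma pPow_mul_self {p : ℝ} (hp : 1 < p) (a : ℝ) : pPow p a * a = |a| ^ p := by
  have key : ∀ a : ℝ, 0 ≤ a → pPow p a * a = |a| ^ p := by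
    intro a ha
    rw [pPow_nn hp ha, abs_of_nonneg ha]
    rcases ha.eq_or_lt with h | h
    · rw [← h, Real.zero_rpow (by linarith : p ≠ 0), mul_zero]
    · rw [Real.rpow_sub_one h.ne', div_mul_cancel₀ _ h.ne']
  rcases le_or_gt 0 a with ha | ha
  · exact key a ha
  · have := key (-a) (by linarith)
    rw [pPow_neg', abs_neg] at this
    linarith

lemma abs_pPow_le {p : ℝ} (hp : 1 < p) (a : ℝ) : |pPow p a| ≤ |a| ^ (p - 1) := by
  unfold pPow
  rw [abs_mul, abs_of_nonneg (Real.rpow_nonneg (abs_nonneg a) _)]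
  have : |Real.sign a| ≤ 1 := by
    rcases Real.sign_apply_eq a with h | h | h <;> rw [h] <;> simp
  exact mul_le_of_le_one_right (Real.rpow_nonneg (abs_nonneg a) _) this

lemma abs_pPow_sub_le {p : ℝ} (hp : 1 < p) (a b : ℝ) :
    |pPow p (a - b)| ≤ 2 ^ (p - 1) * (|a| ^ (p - 1) + |b| ^ (p - 1)) := by
  refine (abs_pPow_le hp _).trans ?_
  have h1 : |a - b| ≤ 2 * max |a| |b| := by
    have := abs_sub a b
    have := le_max_left |a| |b|
    have := le_max_right |a| |b|
    linarith
  have hm : 0 ≤ max |a| |b| := le_max_of_le_left (abs_nonneg a)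
  have hA := Real.rpow_nonneg (abs_nonneg a) (p - 1)
  have hB := Real.rpow_nonneg (abs_nonneg b) (p - 1)
  calc |a - b| ^ (p - 1) ≤ (2 * max |a| |b|) ^ (p - 1) :=
        Real.rpow_le_rpow (abs_nonneg _) h1 (by linarith)
    _ = 2 ^ (p - 1) * (max |a| |b|) ^ (p - 1) := Real.mul_rpow (by norm_num) hm
    _ ≤ _ := by
        refine mul_le_mul_of_nonneg_left ?_ (Real.rpow_nonneg (by norm_num) _)
        rcases max_choice |a| |b| with h | h <;> rw [h] <;> linarith

section
variable {X : Type*} {m : X → ℝ} {b : X → X → ℝ} {c : X → ℝ} {p : ℝ}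

lemma summable_H (hG : IsGraph m b) (hp : 1 < p) {f : X → ℝ} {x : X}
    (hf : Summable fun y => b x y * |f y| ^ (p - 1)) (a : ℝ) :
    Summable fun y => b x y * pPow p (a - f y) := by
  obtain ⟨-, hb, -, -, hs⟩ := hG
  refine Summable.of_norm_bounded
    (g := fun y => 2 ^ (p - 1) * (b x y * |a| ^ (p - 1) + b x y * |f y| ^ (p - 1))) ?_ ?_
  · exact (((hs x).mul_right _).add hf).mul_left _
  · intro y
    rw [Real.norm_eq_abs, abs_mul, abs_of_nonneg (hb x y)]
    have := mul_le_mul_of_nonneg_left (abs_pPow_sub_le hp a (f y)) (hb x y)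
    linarith

lemma m_mul_H (hG : IsGraph m b) (f : X → ℝ) (x : X) :
    m x * HOp m b c p f x = ∑' y, b x y * pPow p (f x - f y) + c x * pPow p (f x) := by
  have := (hG.1 x).ne'
  unfold HOp
  field_simp

lemma H_mono (hG : IsGraph m b) (hp : 1 < p) {f g : X → ℝ} {x : X}
    (hf : Summable fun y => b x y * |f y| ^ (p - 1))
    (hg : Summable fun y => b x y * |g y| ^ (p - 1))
    (hx : f x = g x) (hy : ∀ y, 0 < b x y → f y ≤ g y) :
    HOp m b c p g x ≤ HOp m b c p f x := by
  refine le_of_mul_le_mul_left ?_ (hG.1 x)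
  rw [m_mul_H hG, m_mul_H hG, hx]
  gcongr ?_ + _
  refine (summable_H hG hp hg _).tsum_le_tsum ?_ (summable_H hG hp hf _)
  intro y
  rcases (hG.2.1 x y).eq_or_lt with h | h
  · simp [← h]
  · exact mul_le_mul_of_nonneg_left
      ((pPow_strictMono hp).monotone (by linarith [hy y h])) h.le

lemma H_eq (hG : IsGraph m b) (hp : 1 < p) {f g : X → ℝ} {x : X}
    (hf : Summable fun y => b x y * |f y| ^ (p - 1))
    (hg : Summable fun y => b x y * |g y| ^ (p - 1))
    (hx : f x = g x) (hy : ∀ y, 0 < b x y → f y ≤ g y)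
    (hle : HOp m b c p f x ≤ HOp m b c p g x) : ∀ y, 0 < b x y → f y = g y := by
  by_contra! hcon
  obtain ⟨y, hby, hne⟩ := hcon
  refine absurd hle (not_le.2 ?_)
  refine lt_of_mul_lt_mul_left ?_ (hG.1 x).le
  rw [m_mul_H hG, m_mul_H hG, hx]
  gcongr ?_ + _
  refine Summable.tsum_lt_tsum (i := y) ?_ ?_ (summable_H hG hp hg _) (summable_H hG hp hf _)
  · intro y
    rcases (hG.2.1 x y).eq_or_lt with h | h
    · simp [← h]
    · exact mul_le_mul_of_nonneg_left
        ((pPow_strictMono hp).monotone (by linarith [hy y h])) h.le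
  · have := lt_of_le_of_ne (hy y hby) hne
    exact mul_lt_mul_of_pos_left (pPow_strictMono hp (by linarith)) hby

lemma H_smul (f : X → ℝ) (x : X) {t : ℝ} (ht : 0 < t) :
    HOp m b c p (fun y => t * f y) x = t ^ (p - 1) * HOp m b c p f x := by
  unfold HOp
  simp only [← mul_sub, pPow_mul _ _ ht]
  have : ∀ y, b x y * (t ^ (p - 1) * pPow p (f x - f y)) =
      t ^ (p - 1) * (b x y * pPow p (f x - f y)) := fun y => by ring
  simp only [this, tsum_mul_left]
  ring

lemma H_neg (f : X → ℝ) (x : X) :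
    HOp m b c p (fun y => - f y) x = - HOp m b c p f x := by
  unfold HOp
  have : ∀ y, b x y * pPow p (- f x - - f y) = - (b x y * pPow p (f x - f y)) := fun y => by
    rw [← mul_neg, ← pPow_neg']; congr 2; ring
  simp only [this, tsum_neg, pPow_neg']
  ring

lemma green (hG : IsGraph m b) (hp : 1 < p) (B : Finset X) (g : X → ℝ)
    (hg0 : ∀ x ∉ B, g x = 0) (hgF : MemF b p B g) :
    energy b c p g = ∑ x ∈ B, g x * (m x * HOp m b c p g x) := by
  set F : X × X → ℝ := fun z => b z.1 z.2 * pPow p (g z.1 - g z.2) * g z.1 with hF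
  have hfib : ∀ x, Summable fun y => F (x, y) := by
    intro x
    by_cases hx : x ∈ B
    · have h1 := (summable_H hG hp (hgF x (Finset.mem_coe.2 hx)) (g x)).mul_right (g x)
      simpa only [hF] using h1
    · simp [hF, hg0 x hx, summable_zero]
  have hFs : Summable F := by
    rw [← summable_abs_iff]
    refine (summable_prod_of_nonneg (fun z => abs_nonneg _)).2 ⟨fun x => (hfib x).abs, ?_⟩
    refine summable_of_ne_finset_zero (s := B) ?_
    intro x hx
    simp [hF, hg0 x hx]
  have hdec : ∀ z : X × X, b z.1 z.2 * |g z.1 - g z.2| ^ p = F z + F z.swap := by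
    intro z
    simp only [hF, Prod.fst_swap, Prod.snd_swap]
    rw [← pPow_mul_self hp, hG.2.2.1 z.2 z.1, ← neg_sub (g z.1) (g z.2), pPow_neg']
    ring
  have hsw : Summable fun z : X × X => F z.swap :=
    (Equiv.prodComm X X).summable_iff.2 hFs
  have hsw' : ∑' z : X × X, F z.swap = ∑' z, F z := (Equiv.prodComm X X).tsum_eq F
  unfold energy
  simp only [hdec]
  rw [hFs.tsum_add hsw, hsw', hFs.tsum_prod' hfib,
    tsum_eq_sum (s := B) (fun x hx => by simp [hF, hg0 x hx]),
    tsum_eq_sum (s := B) (fun x hx => by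
      simp [hg0 x hx, Real.zero_rpow (by linarith : p ≠ 0)])]
  rw [← two_mul, ← mul_assoc]
  norm_num
  rw [← Finset.sum_add_distrib]
  refine Finset.sum_congr rfl fun x hx => ?_
  rw [m_mul_H hG, ← pPow_mul_self hp]
  simp only [hF, tsum_mul_right]
  ring

lemma energy_pos (hG : IsGraph m b) {Kt : Set X} (hlam : 0 < lam0 m b c p Kt)
    {φ : X → ℝ} (hφ : MemCc Kt φ) (h0 : φ ≠ 0) : 0 < energy b c p φ := by
  have hbdd : BddBelow {r : ℝ | ∃ φ : X → ℝ, MemCc Kt φ ∧ φ ≠ 0 ∧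
      r = energy b c p φ / ∑' x, |φ x| ^ p * m x} := by
    by_contra h
    have := Real.sInf_of_not_bddBelow h
    unfold lam0 at hlam
    linarith
  have h1 : 0 < energy b c p φ / ∑' x, |φ x| ^ p * m x :=
    hlam.trans_le (csInf_le hbdd ⟨φ, hφ, h0, rfl⟩)
  have h2 : 0 ≤ ∑' x, |φ x| ^ p * m x :=
    tsum_nonneg fun x => mul_nonneg (Real.rpow_nonneg (abs_nonneg _) _) (hG.1 x).le
  by_contra hneg
  exact absurd (div_nonpos_of_nonpos_of_nonneg (not_lt.1 hneg) h2) (not_le.2 h1)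

lemma keyE (hG : IsGraph m b) (hp : 1 < p) {Kt : Set X} (hKt : Kt.Finite)
    (hlam : 0 < lam0 m b c p Kt) {B : Set X} (hB : B ⊆ Kt) (f : X → ℝ)
    (hfF : MemF b p B f) (hpos : ∀ x ∈ B, 0 < f x)
    (hout : ∀ x ∈ B, ∀ y ∉ B, 0 < b x y → f y ≤ 0)
    (hH : ∀ x ∈ B, HOp m b c p f x ≤ 0) : ∀ x, x ∉ B := by
  classical
  intro x0 hx0
  have hBf : B.Finite := hKt.subset hB
  set g : X → ℝ := B.indicator f with hg
  have hgF : MemF b p B g := by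
    intro x hx
    refine Summable.of_nonneg_of_le (fun y => ?_) (fun y => ?_) (hfF x hx)
    · exact mul_nonneg (hG.2.1 x y) (Real.rpow_nonneg (abs_nonneg _) _)
    · refine mul_le_mul_of_nonneg_left ?_ (hG.2.1 x y)
      by_cases hy : y ∈ B
      · simp [hg, hy]
      · simp only [hg, Set.indicator_of_notMem hy, abs_zero]
        rw [Real.zero_rpow (by linarith)]
        exact Real.rpow_nonneg (abs_nonneg _) _
  have hcc : MemCc Kt g := by
    refine ⟨hBf.subset Set.support_indicator_subset, fun x hx => ?_⟩
    exact Set.indicator_of_notMem (fun h => hx (hB h)) f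
  have hne : g ≠ 0 := fun h => by
    have h1 := congrFun h x0
    simp only [hg, Set.indicator_of_mem hx0, Pi.zero_apply] at h1
    exact (hpos x0 hx0).ne' h1
  have hE := energy_pos hG hlam hcc hne
  rw [green hG hp hBf.toFinset g
    (fun x hx => Set.indicator_of_notMem (by simpa using hx) f) (by simpa using hgF)] at hE
  refine absurd hE (not_lt.2 (Finset.sum_nonpos fun x hx => ?_))
  have hx : x ∈ B := by simpa using hx
  have hgx : g x = f x := Set.indicator_of_mem hx f
  rw [hgx]
  refine mul_nonpos_of_nonneg_of_nonpos (hpos x hx).le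
    (mul_nonpos_of_nonneg_of_nonpos (hG.1 x).le (le_trans ?_ (hH x hx)))
  refine H_mono hG hp (hfF x hx) (hgF x hx) hgx.symm fun y hy => ?_
  by_cases hyB : y ∈ B
  · simp [hg, hyB]
  · simp only [hg, Set.indicator_of_notMem hyB]
    exact hout x hx y hyB hy

end

theorem stmt15 {X : Type*} [Countable X] [Infinite X]
    (m : X → ℝ) (b : X → X → ℝ) (c : X → ℝ) (p : ℝ)
    (hG : IsGraph m b) (hgconn : ConnectedIn b Set.univ) (hp : 1 < p)
    (K Kt : Set X) (hKKt : K ⊆ Kt) (hK : K.Finite) (hKt : Kt.Finite)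
    (hlam : 0 < lam0 m b c p Kt)
    (u v : X → ℝ) (hvF : MemF b p K v) (huF : MemF b p K u)
    (hHv : ∀ x ∈ K, 0 ≤ HOp m b c p v x)
    (hvbd : ∀ x ∈ bdry b K ∪ (Kt \ K), 0 ≤ v x)
    (hHuv : ∀ x ∈ K, HOp m b c p u x ≤ HOp m b c p v x)
    (hubd : ∀ x ∈ bdry b K ∪ (Kt \ K), u x ≤ v x)
    (hcase : (∀ x ∉ Kt, v x = 0) ∨
      ((∀ x ∉ Kt, u x = 0) ∧ (∀ x ∈ K, 0 ≤ HOp m b c p u x) ∧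
        ∀ x ∈ bdry b K ∪ (Kt \ K), 0 ≤ u x)) :
    ∀ x ∈ K, u x ≤ v x := by
  have hbd : ∀ x ∈ K, ∀ y ∉ K, 0 < b x y → y ∈ bdry b K ∪ (Kt \ K) := fun x hx y hy h =>
    Or.inl ⟨hy, x, hx, by rwa [hG.2.2.1 y x]⟩
  -- step 1: v ≥ 0 on K
  have hv0 : ∀ x ∈ K, 0 ≤ v x := by
    have h := keyE hG hp hKt hlam (B := {x | x ∈ K ∧ v x < 0}) (fun x hx => hKKt hx.1)
      (fun y => - v y) (fun x hx => by simpa using hvF x hx.1)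
      (fun x hx => by have := hx.2; linarith)
      (fun x hx y hy hb => by
        by_cases hyK : y ∈ K
        · have : ¬ v y < 0 := fun h => hy ⟨hyK, h⟩
          linarith
        · have := hvbd y (hbd x hx.1 y hyK hb)
          linarith)
      (fun x hx => by rw [H_neg]; have := hHv x hx.1; linarith)
    intro x hx
    by_contra hneg
    exact h x ⟨hx, not_le.1 hneg⟩
  have hvn : ∀ x ∈ K, ∀ y, 0 < b x y → 0 ≤ v y := by
    intro x hx y hb
    by_cases hyK : y ∈ K
    · exact hv0 y hyK
    · exact hvbd y (hbd x hx y hyK hb)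
  -- step 2: strong maximum principle
  have hz : ∀ x ∈ K, v x = 0 → ∀ y, 0 < b x y → v y = 0 := by
    intro x hx hvx y hb
    have hzF : Summable fun y => b x y * |(fun _ : X => (0 : ℝ)) y| ^ (p - 1) := by
      simp [Real.zero_rpow (by linarith : p - 1 ≠ 0), summable_zero]
    have hz0 : HOp m b c p (fun _ : X => (0 : ℝ)) x = 0 := by
      simp [HOp, pPow]
    exact (H_eq hG hp (c := c) hzF (hvF x hx) hvx.symm (hvn x hx)
      (by rw [hz0]; exact hHv x hx) y hb).symm
  -- step 3: u ≤ 0 where v = 0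
  have huz : ∀ x ∈ K, v x = 0 → u x ≤ 0 := by
    have h := keyE hG hp hKt hlam (B := {x | x ∈ K ∧ v x = 0 ∧ 0 < u x})
      (fun x hx => hKKt hx.1) u (fun x hx => huF x hx.1) (fun x hx => hx.2.2)
      (fun x hx y hy hb => by
        have hvy := hz x hx.1 hx.2.1 y hb
        by_cases hyK : y ∈ K
        · by_contra hcon
          exact hy ⟨hyK, hvy, not_le.1 hcon⟩
        · exact hvy ▸ hubd y (hbd x hx.1 y hyK hb))
      (fun x hx => by
        refine (hHuv x hx.1).trans ?_
        have hzF : Summable fun y => b x y * |(fun _ : X => (0 : ℝ)) y| ^ (p - 1) := by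
          simp [Real.zero_rpow (by linarith : p - 1 ≠ 0), summable_zero]
        have hz0 : HOp m b c p (fun _ : X => (0 : ℝ)) x = 0 := by
          simp [HOp, pPow]
        rw [← hz0]
        exact H_mono hG hp hzF (hvF x hx.1) hx.2.1.symm (hvn x hx.1))
    intro x hx hvx
    by_contra hneg
    exact h x ⟨hx, hvx, not_le.1 hneg⟩
  -- step 4: maximal ratio
  by_contra! hcon
  obtain ⟨x1, hx1K, hx1⟩ := hcon
  have hAf : {x | x ∈ K ∧ v x < u x}.Finite := hK.subset fun x hx => hx.1
  obtain ⟨x0, hx0, hmax⟩ := Set.exists_max_image _ (fun x => u x / v x) hAf ⟨x1, hx1K, hx1⟩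
  have hvA : ∀ x, x ∈ K → v x < u x → 0 < v x := by
    intro x hx hlt
    refine lt_of_le_of_ne (hv0 x hx) fun h => ?_
    have := huz x hx h.symm
    linarith
  have hv0pos := hvA x0 hx0.1 hx0.2
  set t := u x0 / v x0 with ht
  have ht1 : 1 < t := (one_lt_div hv0pos).2 hx0.2
  have hux0 : u x0 = t * v x0 := by rw [ht, div_mul_cancel₀ _ hv0pos.ne']
  have hdom : ∀ x ∈ K, ∀ y, 0 < b x y → u y ≤ t * v y := by
    intro x hx y hb
    have hvy := hvn x hx y hb
    by_cases hlt : u y ≤ v y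
    · nlinarith
    · by_cases hyK : y ∈ K
      · have hvyp := hvA y hyK (not_le.1 hlt)
        exact (div_le_iff₀ hvyp).1 (hmax y ⟨hyK, not_le.1 hlt⟩)
      · exact absurd (hubd y (hbd x hx y hyK hb)) hlt
  have hpt : 1 < t ^ (p - 1) := Real.one_lt_rpow ht1 (by linarith)
  have htF : ∀ x ∈ K, Summable fun y => b x y * |t * v y| ^ (p - 1) := by
    intro x hx
    have : ∀ y, b x y * |t * v y| ^ (p - 1) = t ^ (p - 1) * (b x y * |v y| ^ (p - 1)) := by
      intro y
      rw [abs_mul, abs_of_pos (by linarith : 0 < t),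
        Real.mul_rpow (by linarith) (abs_nonneg _)]
      ring
    simp only [this]
    exact (hvF x hx).mul_left _
  have hB : ∀ x, x ∈ K → 0 < v x → u x = t * v x →
      HOp m b c p v x ≤ 0 ∧ ∀ y, 0 < b x y → u y = t * v y := by
    intro x hx hvx hux
    have h1 : HOp m b c p (fun y => t * v y) x ≤ HOp m b c p u x :=
      H_mono hG hp (huF x hx) (htF x hx) hux (hdom x hx)
    have h2 := hHuv x hx
    have h3 := hHv x hx
    constructor
    · rw [H_smul v x (by linarith)] at h1
      nlinarith
    · refine H_eq hG hp (c := c) (m := m) (huF x hx) (htF x hx) hux (hdom x hx) ?_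
      rw [H_smul v x (by linarith)]
      nlinarith
  refine keyE hG hp hKt hlam (B := {x | x ∈ K ∧ 0 < v x ∧ u x = t * v x})
    (fun x hx => hKKt hx.1) v (fun x hx => hvF x hx.1) (fun x hx => hx.2.1) ?_
    (fun x hx => (hB x hx.1 hx.2.1 hx.2.2).1) x0 ⟨hx0.1, hv0pos, hux0⟩
  intro x hx y hy hb
  by_contra hpos
  have hpos : 0 < v y := not_le.1 hpos
  have huy := (hB x hx.1 hx.2.1 hx.2.2).2 y hb
  by_cases hyK : y ∈ K
  · exact hy ⟨hyK, hpos, huy⟩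
  · have := hubd y (hbd x hx.1 y hyK hb)
    nlinarith
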